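/- The move H5 is derivable from the homotopy moves: for all words x, y, z, t and distinct letters A, B, C not occurring in them, the word xAByCAzBCt is homotopic to xBAyACzCBt. -/

import Mathlib

/-- A Gauss word: every letter that occurs, occurs exactly twice. -/
def IsGauss (w : List ℕ) : Prop := ∀ a ∈ w, w.count a = 2

/-- Rank of a word: the number of distinct letters occurring in it. -/
def rank (w : List ℕ) : ℕ := w.dedup.length

/-- Two words are isomorphic if one is obtained from the other by an
injective (hence bijective onto its image) relabeling of letters. -/
def Isomorphic (w₁ w₂ : List ℕ) : Prop :=
  ∃ f : ℕ → ℕ, Function.Injective f ∧ w₂ = w₁.map f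

/-- One step: an isomorphism or a homotopy move H1, H2, H3. -/
inductive Move : List ℕ → List ℕ → Prop
  | iso {w₁ w₂ : List ℕ} : Isomorphic w₁ w₂ → Move w₁ w₂
  | h1 (x y : List ℕ) (A : ℕ) (hA : A ∉ x ++ y) :
      Move (x ++ [A, A] ++ y) (x ++ y)
  | h2 (x y z : List ℕ) (A B : ℕ) (hAB : A ≠ B)
      (hA : A ∉ x ++ y ++ z) (hB : B ∉ x ++ y ++ z) :
      Move (x ++ [A, B] ++ y ++ [B, A] ++ z) (x ++ y ++ z)
  | h3 (x y z t : List ℕ) (A B C : ℕ)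
      (hAB : A ≠ B) (hAC : A ≠ C) (hBC : B ≠ C)
      (hA : A ∉ x ++ y ++ z ++ t) (hB : B ∉ x ++ y ++ z ++ t)
      (hC : C ∉ x ++ y ++ z ++ t) :
      Move (x ++ [A, B] ++ y ++ [A, C] ++ z ++ [B, C] ++ t)
           (x ++ [B, A] ++ y ++ [C, A] ++ z ++ [C, B] ++ t)

/-- Homotopy: the equivalence relation generated by isomorphisms and H1–H3. -/
def Homotopic : List ℕ → List ℕ → Prop := Relation.EqvGen Move

/-!
An H2 move surrounds the segment `AByCAzBC` with `DE … ED`, where `D` and `E` are fresh. The pairs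
`EA`, `CA`, `CE` then admit an inverse H3 move, after which `E` stands next to both occurrences of
`B`; a second H2 move cancels `E` against `B`, leaving `xDAyACzCDt`. So the fresh letter `D` has
taken over the role of `B` in the right-hand side of H5.
-/

theorem Move.homotopic {v w : List ℕ} (h : Move v w) : Homotopic v w :=
  .rel _ _ h

theorem Homotopic.symm {v w : List ℕ} (h : Homotopic v w) : Homotopic w v :=
  Relation.EqvGen.symm _ _ h

theorem Homotopic.trans {u v w : List ℕ} (huv : Homotopic u v) (hvw : Homotopic v w) :
    Homotopic u w :=
  Relation.EqvGen.trans _ _ _ huv hvw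

instance : Trans Homotopic Homotopic Homotopic := ⟨Homotopic.trans⟩

theorem map_swap_eq_self {α : Type*} [DecidableEq α] {a b : α} {l : List α}
    (ha : a ∉ l) (hb : b ∉ l) : l.map (Equiv.swap a b) = l :=
  (List.map_congr_left fun _ hc => Equiv.swap_apply_of_ne_of_ne
    (ne_of_mem_of_not_mem hc ha) (ne_of_mem_of_not_mem hc hb)).trans l.map_id

theorem homotopic_rename (x y z : List ℕ) {A B : ℕ}
    (hA : A ∉ x ++ y ++ z) (hB : B ∉ x ++ y ++ z) :
    Homotopic (x ++ [A] ++ y ++ [A] ++ z) (x ++ [B] ++ y ++ [B] ++ z) := by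
  refine (Move.iso ⟨Equiv.swap A B, (Equiv.swap A B).injective, ?_⟩).homotopic
  simp only [List.mem_append, not_or] at hA hB
  simp [map_swap_eq_self hA.1.1 hB.1.1, map_swap_eq_self hA.1.2 hB.1.2,
    map_swap_eq_self hA.2 hB.2]

/-- H5 is derivable: xAByCAzBCt is homotopic to xBAyACzCBt. -/
theorem h5_derivable (x y z t : List ℕ) (A B C : ℕ)
    (hAB : A ≠ B) (hAC : A ≠ C) (hBC : B ≠ C)
    (hA : A ∉ x ++ y ++ z ++ t) (hB : B ∉ x ++ y ++ z ++ t)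
    (hC : C ∉ x ++ y ++ z ++ t) :
    Homotopic (x ++ [A, B] ++ y ++ [C, A] ++ z ++ [B, C] ++ t)
              (x ++ [B, A] ++ y ++ [A, C] ++ z ++ [C, B] ++ t) := by
  obtain ⟨D, hD, E, hE, hDE⟩ :=
    (List.finite_toSet (A :: B :: C :: (x ++ y ++ z ++ t))).infinite_compl.nontrivial
  simp only [Set.mem_compl_iff, Set.mem_ofPred_eq, List.mem_cons, List.mem_append, not_or]
    at hA hB hC hD hE
  calc
    Homotopic (x ++ [A, B] ++ y ++ [C, A] ++ z ++ [B, C] ++ t)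
        (x ++ [D, E, A, B] ++ y ++ [C, A] ++ z ++ [B, C, E, D] ++ t) := by
      simpa using (Move.h2 x ([A, B] ++ y ++ [C, A] ++ z ++ [B, C]) t D E
        hDE (by grind) (by grind)).homotopic.symm
    Homotopic _ (x ++ [D, A, E, B] ++ y ++ [A, C] ++ z ++ [B, E, C, D] ++ t) := by
      simpa using (Move.h3 (x ++ [D]) ([B] ++ y) (z ++ [B]) ([D] ++ t) A E C
        (by grind) hAC (by grind) (by grind) (by grind) (by grind)).homotopic.symm
    Homotopic _ (x ++ [D, A] ++ y ++ [A, C] ++ z ++ [C, D] ++ t) := by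
      simpa using (Move.h2 (x ++ [D, A]) (y ++ [A, C] ++ z) ([C, D] ++ t) E B
        (by grind) (by grind) (by grind)).homotopic
    Homotopic _ (x ++ [B, A] ++ y ++ [A, C] ++ z ++ [C, B] ++ t) := by
      simpa using homotopic_rename (A := D) (B := B) x ([A] ++ y ++ [A, C] ++ z ++ [C]) t
        (by grind) (by grind)
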